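/- arXiv:2212.07012 — 2 statements merged into one kernel-verified Lean document; each statement's English description precedes it below -/
import Mathlib

section
/- Ramanujan identity for E6: for all τ ∈ ℍ, (1/(2πi)) · E6'(τ) = (E2(τ)·E6(τ) − E4(τ)²)/2, where E6' denotes the complex derivative of E6. -/
/-!
The Serre derivative `D E₆ - (6/12) E₂ E₆`, with `D = (2πi)⁻¹ d/dτ`, is holomorphic and invariant
under the slash action of `SL(2, ℤ)` in weight `8`: the derivative of the automorphy factor is
cancelled by the quasi-modularity of `E₂`. Since `E₂`, `E₄`, `E₆` tend to `1` at `i∞` while `D E₆`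
tends to `0` there (`tendsto_normalizedDeriv_atImInfty`), the sum of this Serre derivative and
`E₄² / 2` vanishes at `i∞`, so it is a level one cusp form of weight `8` (`ramanujanDefect`). There
are no nonzero level one cusp forms of weight less than `12`, so the sum is zero, which is the
identity for Mathlib's Eisenstein series. The lemmas `E2_eq_mathlib`, `E4_eq_mathlib` and
`E6_eq_mathlib` identify these, through their `q`-expansions, with the series of the statement.
-/

/-- `q = exp(2πiτ)`. -/
noncomputable def qexp (τ : ℂ) : ℂ := Complex.exp (2 * Real.pi * Complex.I * τ)

/-- Divisor power sum `σ_k(n) = ∑_{d | n} d^k`, as a complex number. -/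
noncomputable def sigmaC (k n : ℕ) : ℂ := ∑ d ∈ Nat.divisors n, (d : ℂ) ^ k

/-- Eisenstein series `E₂`. -/
noncomputable def E2 (τ : ℂ) : ℂ := 1 - 24 * ∑' n : ℕ, sigmaC 1 (n + 1) * qexp τ ^ (n + 1)

/-- Eisenstein series `E₄`. -/
noncomputable def E4 (τ : ℂ) : ℂ := 1 + 240 * ∑' n : ℕ, sigmaC 3 (n + 1) * qexp τ ^ (n + 1)

/-- Eisenstein series `E₆`. -/
noncomputable def E6 (τ : ℂ) : ℂ := 1 - 504 * ∑' n : ℕ, sigmaC 5 (n + 1) * qexp τ ^ (n + 1)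

/-- The discriminant form `Δ = (E₄³ - E₆²)/1728`. -/
noncomputable def Δfun (τ : ℂ) : ℂ := (E4 τ ^ 3 - E6 τ ^ 2) / 1728

/-- The ratio of quasi-periods `p(τ) = τ - 6i/(π E₂(τ))`. -/
noncomputable def pfun (τ : ℂ) : ℂ := τ - 6 * Complex.I / (Real.pi * E2 τ)

open UpperHalfPlane Filter Topology ModularForm Derivative
open scoped Manifold MatrixGroups ModularForm ArithmeticFunction.sigma

/-! ### Comparison with the Eisenstein series of Mathlib -/

lemma sigmaC_eq (k n : ℕ) : sigmaC k n = (σ k n : ℂ) := by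
  simp [sigmaC, ArithmeticFunction.sigma_apply]

lemma tsum_sigmaC_eq_tsum_pnat (k : ℕ) (z : ℂ) :
    ∑' n : ℕ, sigmaC k (n + 1) * qexp z ^ (n + 1) =
      ∑' n : ℕ+, (σ k n : ℂ) * Complex.exp (2 * Real.pi * Complex.I * z) ^ (n : ℕ) := by
  rw [tsum_pnat_eq_tsum_succ
    (f := fun n : ℕ ↦ (σ k n : ℂ) * Complex.exp (2 * Real.pi * Complex.I * z) ^ n)]
  simp [sigmaC_eq, qexp]

lemma E2_eq_mathlib (z : ℍ) : E2 z = EisensteinSeries.E2 z := by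
  rw [E2, tsum_sigmaC_eq_tsum_pnat, EisensteinSeries.E2_eq_tsum_cexp]

lemma E4_eq_mathlib (z : ℍ) : E4 z = E₄ z := by
  rw [E4, tsum_sigmaC_eq_tsum_pnat, EisensteinSeries.q_expansion_bernoulli _ ⟨2, rfl⟩]
  norm_num [show bernoulli 4 = -1 / 30 by decide +kernel]

lemma E6_eq_mathlib (z : ℍ) : E6 z = E₆ z := by
  rw [E6, tsum_sigmaC_eq_tsum_pnat, EisensteinSeries.q_expansion_bernoulli _ ⟨3, rfl⟩]
  norm_num [show bernoulli 6 = 1 / 42 by decide +kernel]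

/-! ### Behaviour at the cusp -/

lemma tendsto_qExpansion_coeff_zero_atImInfty {f : ℍ → ℂ}
    (hper : Function.Periodic (f ∘ ofComplex) 1) (hhol : MDiff f) (hbdd : IsBoundedAtImInfty f) :
    Tendsto f atImInfty (𝓝 ((qExpansion 1 f).coeff 0)) := by
  have hper' : Function.Periodic (f ∘ ofComplex) ((1 : ℝ) : ℂ) := by simpa using hper
  have han := analyticAt_cuspFunction_zero one_pos hper' hhol hbdd
  have h := han.continuousAt.tendsto.comp (qParam_tendsto_atImInfty one_pos)
  refine (h.congr fun τ ↦ eq_cuspFunction τ one_ne_zero hper').trans_eq ?_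
  simp [qExpansion_coeff]

/-- Writing `f` as `F(q)` with `F` analytic at `0`, the chain rule gives `D f = q F'(q)`, which
tends to `0` at `i∞`. -/
lemma tendsto_normalizedDeriv_atImInfty {f : ℍ → ℂ}
    (hper : Function.Periodic (f ∘ ofComplex) 1) (hhol : MDiff f) (hbdd : IsBoundedAtImInfty f) :
    Tendsto (normalizedDerivOfComplex f) atImInfty (𝓝 0) := by
  have hper' : Function.Periodic (f ∘ ofComplex) ((1 : ℝ) : ℂ) := by simpa using hper
  have han := analyticAt_cuspFunction_zero one_pos hper' hhol hbdd
  have hq := qParam_tendsto_atImInfty (h := 1) one_pos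
  have h := hq.mul (han.deriv.continuousAt.tendsto.comp hq)
  rw [zero_mul] at h
  refine h.congr fun τ ↦ ?_
  have hd : HasDerivAt (Function.Periodic.qParam 1)
      (Function.Periodic.qParam 1 τ * (2 * Real.pi * Complex.I)) (τ : ℂ) := by
    have := ((hasDerivAt_id (τ : ℂ)).const_mul (2 * Real.pi * Complex.I)).cexp
    rw [show Function.Periodic.qParam 1 = fun w ↦ Complex.exp (2 * Real.pi * Complex.I * w) by
      funext w; simp [Function.Periodic.qParam]]
    simpa using this
  have hF := (differentiableAt_cuspFunction one_pos hper' hhol hbdd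
    (Function.Periodic.norm_qParam_lt_one one_pos τ.im_pos)).hasDerivAt
  have hcomp := hF.comp (τ : ℂ) hd
  have heq : f ∘ ofComplex = cuspFunction 1 f ∘ Function.Periodic.qParam 1 := by
    funext w
    exact (Function.Periodic.eq_cuspFunction one_ne_zero hper' w).symm
  rw [normalizedDerivOfComplex, heq, hcomp.deriv, Function.comp_apply]
  field_simp [Complex.two_pi_I_ne_zero]

lemma E2_mathlib_periodic : Function.Periodic (EisensteinSeries.E2 ∘ ofComplex) 1 := by
  intro w
  by_cases! hw : 0 < w.im
  · have hw' : 0 < (w + 1).im := by simpa using hw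
    simp only [Function.comp_apply, ofComplex_apply_of_im_pos hw', ofComplex_apply_of_im_pos hw,
      EisensteinSeries.E2_eq_tsum_cexp]
    simp [mul_add, Complex.exp_add, Complex.exp_two_pi_mul_I]
  · have hw' : (w + 1).im ≤ 0 := by simpa using hw
    simp [ofComplex_apply_of_im_nonpos hw', ofComplex_apply_of_im_nonpos hw]

lemma tendsto_E2_atImInfty : Tendsto EisensteinSeries.E2 atImInfty (𝓝 1) := by
  have h := tendsto_qExpansion_coeff_zero_atImInfty E2_mathlib_periodic
    E2_mdifferentiable EisensteinSeries.isBoundedAtImInfty_E2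
  have hc := (hasFPowerSeriesOnBall_cuspFunction (h := 1) (f := EisensteinSeries.E2) one_pos
    (analyticAt_cuspFunction_zero one_pos (by simpa only [Complex.ofReal_one] using E2_mathlib_periodic)
      E2_mdifferentiable EisensteinSeries.isBoundedAtImInfty_E2)
    (fun τ ↦ by simpa only [Function.Periodic.qParam, Complex.ofReal_one, div_one] using
      EisensteinSeries.hasSum_qExpansion_E2 (z := τ))).coeff_zero 0
  rw [qExpansion_coeff, iteratedDeriv_zero, ← hc] at h
  simpa using h

lemma modularForm_periodic {k : ℤ} (f : ModularForm 𝒮ℒ k) :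
    Function.Periodic (f ∘ ofComplex) 1 := by
  simpa using SlashInvariantFormClass.periodic_comp_ofComplex f one_mem_strictPeriods_SL

lemma modularForm_isBoundedAtImInfty {k : ℤ} (f : ModularForm 𝒮ℒ k) :
    IsBoundedAtImInfty f :=
  have : Fact (IsCusp OnePoint.infty 𝒮ℒ) :=
    ⟨Subgroup.isCusp_of_mem_strictPeriods one_pos one_mem_strictPeriods_SL⟩
  ModularFormClass.bdd_at_infty f

lemma tendsto_E_atImInfty {k : ℕ} (hk : 3 ≤ k) (hk2 : Even k) :
    Tendsto (E hk) atImInfty (𝓝 1) := by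
  have h := tendsto_qExpansion_coeff_zero_atImInfty (modularForm_periodic (E hk))
    (E hk).holo' (modularForm_isBoundedAtImInfty (E hk))
  rwa [EisensteinSeries.E_qExpansion_coeff_zero hk hk2] at h

/-! ### The cusp form of weight 8 -/

lemma ramanujanDefect_slash (γ : SL(2, ℤ)) :
    (serreDerivative (6 : ℤ) E₆ + (2⁻¹ : ℂ) • (E₄ * E₄ : ℍ → ℂ)) ∣[(8 : ℤ)] γ =
      serreDerivative (6 : ℤ) E₆ + (2⁻¹ : ℂ) • (E₄ * E₄ : ℍ → ℂ) := by
  have h6 : (E₆ : ℍ → ℂ) ∣[(6 : ℤ)] γ = E₆ := E₆.slash_action_eq' _ ⟨γ, rfl⟩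
  have h4 : (E₄ : ℍ → ℂ) ∣[(4 : ℤ)] γ = E₄ := E₄.slash_action_eq' _ ⟨γ, rfl⟩
  have hs := serreDerivative_slash_invariant (k := 6) E₆.holo' h6
  have hm := mul_slash_SL2 4 4 γ E₄ E₄
  norm_num only at hs hm
  rw [h4] at hm
  rw [SlashAction.add_slash, SL_smul_slash, hm]
  exact congrArg (· + _) hs

/-- The cusp form `D E₆ - E₂ E₆ / 2 + E₄² / 2` of weight `8` whose vanishing is Ramanujan's
identity. -/
noncomputable def ramanujanDefect : CuspForm 𝒮ℒ 8 where
  toFun := serreDerivative (6 : ℤ) E₆ + (2⁻¹ : ℂ) • (E₄ * E₄ : ℍ → ℂ)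
  slash_action_eq' := fun _ ⟨γ, hγ⟩ ↦ hγ ▸ ramanujanDefect_slash γ
  holo' := (serreDerivative_mdifferentiable _ E₆.holo').add
    ((E₄.holo'.mul E₄.holo').const_smul _)
  zero_at_cusps' hc := by
    rw [OnePoint.isZeroAt_iff_forall_SL2Z hc]
    intro γ _
    rw [ramanujanDefect_slash γ]
    have hD := tendsto_normalizedDeriv_atImInfty (modularForm_periodic E₆) E₆.holo'
      (modularForm_isBoundedAtImInfty E₆)
    have h4 : Tendsto E₄ atImInfty (𝓝 1) := tendsto_E_atImInfty _ ⟨2, rfl⟩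
    have h6 : Tendsto E₆ atImInfty (𝓝 1) := tendsto_E_atImInfty _ ⟨3, rfl⟩
    have h := (hD.sub ((tendsto_E2_atImInfty.const_mul ((6 : ℤ) * 12⁻¹ : ℂ)).mul h6)).add
      ((h4.mul h4).const_mul (2⁻¹ : ℂ))
    -- the limit of the sum is `0 - 6/12 + 1/2`
    refine h.trans_eq ?_
    norm_num

lemma normalizedDeriv_E₆ (z : ℍ) :
    normalizedDerivOfComplex E₆ z = (EisensteinSeries.E2 z * E₆ z - E₄ z ^ 2) / 2 := by
  have h0 : ramanujanDefect = 0 :=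
    rank_zero_iff_forall_zero.mp (CuspForm.rank_eq_zero_of_weight_lt_twelve (by norm_num)) _
  have h : serreDerivative (6 : ℤ) E₆ z + 2⁻¹ * (E₄ z * E₄ z) = 0 :=
    DFunLike.congr_fun h0 z
  rw [serreDerivative_apply] at h
  push_cast at h
  linear_combination h

/-- Ramanujan's identity `(1/(2πi)) E₆' = (E₂E₆ - E₄²)/2`. -/
theorem ramanujan_E6 (τ : ℂ) (hτ : 0 < τ.im) :
    HasDerivAt E6 (2 * Real.pi * Complex.I * ((E2 τ * E6 τ - E4 τ ^ 2) / 2)) τ := by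
  obtain ⟨z, rfl⟩ : ∃ z : ℍ, (z : ℂ) = τ := ⟨⟨τ, hτ⟩, rfl⟩
  have hE : E6 =ᶠ[𝓝 (z : ℂ)] E₆ ∘ ofComplex := by
    filter_upwards [isOpen_upperHalfPlaneSet.mem_nhds z.im_pos] with w hw
    rw [Function.comp_apply, ofComplex_apply_of_im_pos hw, ← E6_eq_mathlib]
  have hd := (UpperHalfPlane.mdifferentiableAt_iff.mp (E₆.holo' z)).hasDerivAt
  refine (hd.congr_of_eventuallyEq hE).congr_deriv ?_
  rw [E2_eq_mathlib, E4_eq_mathlib, E6_eq_mathlib, ← normalizedDeriv_E₆,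
    normalizedDerivOfComplex, mul_inv_cancel_left₀ Complex.two_pi_I_ne_zero]
  rfl
end

section
/- For every τ ∈ ℍ with E4(τ)³ ≠ E6(τ)², the complex derivative of J satisfies (1/(2πi)) · J'(τ) = −(1/1728) · E4(τ)² · E6(τ)/Δ(τ). -/
/-- The `J`-invariant `J = E₄³/(E₄³ - E₆²)`. -/
noncomputable def Jinv (τ : ℂ) : ℂ := E4 τ ^ 3 / (E4 τ ^ 3 - E6 τ ^ 2)

open UpperHalfPlane ModularForm Derivative Filter Topology Function
open scoped MatrixGroups CongruenceSubgroup Manifold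

lemma tsum_sigma_eq (k : ℕ) (z : ℍ) :
    ∑' n : ℕ+, (ArithmeticFunction.sigma k n : ℂ) *
        Complex.exp (2 * Real.pi * Complex.I * z) ^ (n : ℤ) =
      ∑' n : ℕ, sigmaC k (n + 1) * qexp z ^ (n + 1) := by
  rw [← tsum_pnat_eq_tsum_succ (f := fun n ↦ sigmaC k n * qexp z ^ n)]
  refine tsum_congr fun n ↦ ?_
  simp [sigmaC, qexp, ArithmeticFunction.sigma_apply]

lemma E4_eq (z : ℍ) : E4 z = ModularForm.E₄ z := by
  rw [EisensteinSeries.q_expansion_bernoulli _ ⟨2, rfl⟩, tsum_sigma_eq, E4,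
    show bernoulli 4 = -1 / 30 by decide +kernel]
  norm_num

lemma E6_eq (z : ℍ) : E6 z = ModularForm.E₆ z := by
  rw [EisensteinSeries.q_expansion_bernoulli _ ⟨3, rfl⟩, tsum_sigma_eq, E6,
    show bernoulli 6 = 1 / 42 by decide +kernel]
  norm_num

lemma analyticAt_cusp {k : ℤ} (f : ModularForm 𝒮ℒ k) :
    AnalyticAt ℂ (cuspFunction 1 f) 0 :=
  analyticAt_cuspFunction_zero one_pos
    (SlashInvariantFormClass.periodic_comp_ofComplex f one_mem_strictPeriods_SL)
    (ModularFormClass.holo f) (ModularFormClass.bdd_at_infty f)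

/-- The chain rule for `f = F(q)`, where `F = cuspFunction 1 f`: `D f = q · dF/dq`. -/
lemma D_eq {k : ℤ} (f : ModularForm 𝒮ℒ k) (z : ℍ) :
    D f z = Periodic.qParam 1 z * deriv (cuspFunction 1 f) (Periodic.qParam 1 z) := by
  have hper := SlashInvariantFormClass.periodic_comp_ofComplex f one_mem_strictPeriods_SL
  have hq : ‖Periodic.qParam 1 (z : ℂ)‖ < 1 := Periodic.norm_qParam_lt_one one_pos z.im_pos
  have hc := (differentiableAt_cuspFunction one_pos hper (ModularFormClass.holo f)
    (ModularFormClass.bdd_at_infty f) hq).hasDerivAt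
  have hd : HasDerivAt (fun w : ℂ ↦ Periodic.qParam 1 w)
      (Periodic.qParam 1 z * (2 * Real.pi * Complex.I)) z := by
    simpa [Periodic.qParam] using
      ((hasDerivAt_id (z : ℂ)).const_mul (2 * Real.pi * Complex.I)).cexp
  have he : (f ∘ ofComplex) = cuspFunction 1 f ∘ fun w : ℂ ↦ Periodic.qParam 1 w := by
    ext w
    exact (Periodic.eq_cuspFunction one_ne_zero hper w).symm
  rw [normalizedDerivOfComplex, he, (hc.comp (z : ℂ) hd).deriv]
  have : (2 * Real.pi * Complex.I) ≠ 0 := Complex.two_pi_I_ne_zero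
  field_simp

lemma tendsto_D_div {k : ℤ} (f : ModularForm 𝒮ℒ k) :
    Tendsto (fun z : ℍ ↦ D f z / Periodic.qParam 1 z) atImInfty
      (𝓝 ((qExpansion 1 f).coeff 1)) := by
  have h := (analyticAt_cusp f).deriv.continuousAt.tendsto.comp
    (qParam_tendsto_atImInfty one_pos)
  simp only [qExpansion_coeff, iteratedDeriv_one, Nat.factorial_one, Nat.cast_one, inv_one,
    one_mul]
  refine h.congr fun z ↦ ?_
  rw [D_eq, mul_div_cancel_left₀ _ (Periodic.qParam_ne_zero _)]
  rfl

lemma tendsto_value {k : ℤ} (f : ModularForm 𝒮ℒ k) :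
    Tendsto f atImInfty (𝓝 ((qExpansion 1 f).coeff 0)) := by
  have h := (analyticAt_cusp f).continuousAt.tendsto.comp (qParam_tendsto_atImInfty one_pos)
  simp only [qExpansion_coeff, iteratedDeriv_zero, Nat.factorial_zero, Nat.cast_one, inv_one,
    one_mul]
  refine h.congr fun z ↦ ?_
  exact eq_cuspFunction z one_ne_zero
    (SlashInvariantFormClass.periodic_comp_ofComplex f one_mem_strictPeriods_SL)

/-- The combination `2 E₄ · D E₆ - 3 E₆ · D E₄`, half of the first Rankin–Cohen bracket
`4 E₄ · D E₆ - 6 E₆ · D E₄`. -/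
noncomputable def bracket (z : ℍ) : ℂ := 2 * E₄ z * D E₆ z - 3 * E₆ z * D E₄ z

/-- Replacing `D` by Serre derivatives does not change the bracket: the `E₂`-terms
`2 · 6/12 · E₂E₄E₆` and `3 · 4/12 · E₂E₆E₄` cancel. -/
lemma bracket_eq : bracket = (2 : ℂ) • (⇑E₄ * serreDerivative (6 : ℤ) E₆) -
    (3 : ℂ) • (⇑E₆ * serreDerivative (4 : ℤ) E₄) := by
  ext z
  simp [bracket]
  ring

lemma slash_eq {k : ℤ} (f : ModularForm 𝒮ℒ k) (γ : SL(2, ℤ)) : ⇑f ∣[k] γ = ⇑f :=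
  SlashInvariantFormClass.slash_action_eq f _ ⟨γ, rfl⟩

lemma mul_serreDerivative_slash {k l m : ℤ} (f : ModularForm 𝒮ℒ k) (g : ModularForm 𝒮ℒ l)
    (hm : k + (l + 2) = m) (γ : SL(2, ℤ)) :
    (⇑f * serreDerivative l g) ∣[m] γ = ⇑f * serreDerivative l g := by
  subst hm
  rw [mul_slash_SL2, slash_eq f γ,
    serreDerivative_slash_invariant (ModularFormClass.holo g) (slash_eq g γ)]

lemma bracket_slash (γ : SL(2, ℤ)) : bracket ∣[(12 : ℤ)] γ = bracket := by
  have hA := mul_serreDerivative_slash (m := 12) E₄ E₆ (by norm_num) γ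
  have hB := mul_serreDerivative_slash (m := 12) E₆ E₄ (by norm_num) γ
  rw [bracket_eq, sub_eq_add_neg, SlashAction.add_slash, SlashAction.neg_slash,
    SL_smul_slash, SL_smul_slash, hA, hB]

lemma tendsto_bracket_div :
    Tendsto (fun z : ℍ ↦ bracket z / Periodic.qParam 1 z) atImInfty (𝓝 (-1728)) := by
  have h := (((tendsto_value E₄).const_mul 2).mul (tendsto_D_div E₆)).sub
    (((tendsto_value E₆).const_mul 3).mul (tendsto_D_div E₄))
  rw [EisensteinSeries.E_qExpansion_coeff_zero _ ⟨2, rfl⟩,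
    EisensteinSeries.E_qExpansion_coeff_zero _ ⟨3, rfl⟩, E₄_qExpansion_coeff_one,
    E₆_qExpansion_coeff_one] at h
  norm_num at h
  refine h.congr fun z ↦ ?_
  simp only [bracket]
  ring

lemma tendsto_discriminant_div :
    Tendsto (fun z : ℍ ↦ discriminant z / Periodic.qParam 1 z) atImInfty (𝓝 1) := by
  refine tendsto_atImInfty_tprod_one_sub_eta_q_pow.congr fun z ↦ ?_
  rw [discriminant_eq_q_prod, mul_div_cancel_left₀ _ (Periodic.qParam_ne_zero _)]

lemma bracket_isZeroAtImInfty : IsZeroAtImInfty bracket := by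
  have h := tendsto_bracket_div.mul (qParam_tendsto_atImInfty one_pos)
  rw [mul_zero] at h
  exact h.congr fun z ↦ div_mul_cancel₀ _ (Periodic.qParam_ne_zero _)

/-- `bracket` as a cusp form of weight 12 and level one. -/
noncomputable def bracketForm : CuspForm 𝒮ℒ 12 where
  toFun := bracket
  slash_action_eq' := fun _ ⟨γ, hγ⟩ ↦ hγ ▸ bracket_slash γ
  holo' := by
    have h4 := ModularFormClass.holo E₄
    have h6 := ModularFormClass.holo E₆
    have h4' := serreDerivative_mdifferentiable (4 : ℤ) h4
    have h6' := serreDerivative_mdifferentiable (6 : ℤ) h6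
    change MDiff bracket
    rw [bracket_eq]
    exact ((h4.mul h6').const_smul 2).sub ((h6.mul h4').const_smul 3)
  zero_at_cusps' {c} hc := by
    rw [Subgroup.IsArithmetic.isCusp_iff_isCusp_SL2Z] at hc
    rw [OnePoint.isZeroAt_iff_forall_SL2Z hc]
    intro γ _
    rw [bracket_slash γ]
    exact bracket_isZeroAtImInfty

lemma bracket_eq_discriminant (z : ℍ) : bracket z = -1728 * discriminant z := by
  obtain ⟨c, hc⟩ := CuspForm.exists_smul_discriminant_of_weight_eq_twelve bracketForm
  have hz (w : ℍ) : bracket w = c * discriminant w := (DFunLike.congr_fun hc w).symm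
  have hlim := tendsto_discriminant_div.const_mul c
  have : c = -1728 := by
    rw [mul_one] at hlim
    refine tendsto_nhds_unique (hlim.congr fun w ↦ ?_) tendsto_bracket_div
    rw [hz, mul_div_assoc]
  rw [hz, this]

/-- A function on `ℂ` extending a modular form has derivative `2πi · D f` on the upper
half-plane. -/
lemma hasDerivAt_of_form {k : ℤ} (f : ModularForm 𝒮ℒ k) {F : ℂ → ℂ} (hF : ∀ z : ℍ, F z = f z)
    (z : ℍ) : HasDerivAt F (2 * Real.pi * Complex.I * D f z) z := by
  have h := (mdifferentiableAt_iff.mp (ModularFormClass.holo f z)).hasDerivAt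
  rw [normalizedDerivOfComplex, mul_inv_cancel_left₀ Complex.two_pi_I_ne_zero]
  refine h.congr_of_eventuallyEq ?_
  filter_upwards [isOpen_upperHalfPlaneSet.mem_nhds z.im_pos] with w hw
  simpa [ofComplex_apply_of_im_pos hw] using hF ⟨w, hw⟩

/-- The derivative of `J`: `(1/(2πi)) J' = -(1/1728) E₄² E₆ / Δ`. -/
theorem J_derivative (τ : ℂ) (hτ : 0 < τ.im) (hΔ : E4 τ ^ 3 ≠ E6 τ ^ 2) :
    HasDerivAt Jinv
      (2 * Real.pi * Complex.I * (-(1 / 1728) * E4 τ ^ 2 * E6 τ / Δfun τ)) τ := by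
  have h4 := hasDerivAt_of_form E₄ E4_eq ⟨τ, hτ⟩
  have h6 := hasDerivAt_of_form E₆ E6_eq ⟨τ, hτ⟩
  have hB := bracket_eq_discriminant ⟨τ, hτ⟩
  rw [discriminant_eq_E₄_cube_sub_E₆_sq, bracket, ← E4_eq, ← E6_eq] at hB
  simp only at h4 h6 hB
  have hne : E4 τ ^ 3 - E6 τ ^ 2 ≠ 0 := sub_ne_zero.mpr hΔ
  refine ((h4.pow 3).div ((h4.pow 3).sub (h6.pow 2)) hne).congr_deriv ?_
  simp only [Δfun, Pi.pow_apply, Pi.sub_apply]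
  generalize D E₄ ⟨τ, hτ⟩ = x at *
  generalize D E₆ ⟨τ, hτ⟩ = y at *
  -- Cancelling `2πi` leaves the bracket identity `hB` times `E₄² E₆`.
  field_simp
  push_cast
  linear_combination E4 τ ^ 2 * E6 τ * hB
end
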